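/- For every positive integer k, there exists a compact metrizable space whose fd-height is exactly k. -/

import Mathlib

open Set Function

noncomputable section

/-- Topology of pointwise convergence on `C(X, ℝ)`. -/
def ptTop (X : Type*) [TopologicalSpace X] : TopologicalSpace C(X, ℝ) :=
  TopologicalSpace.induced (fun f => (f : X → ℝ)) Pi.topologicalSpace

/-- `X` ℓ-dominates `Y`: a continuous linear map of `C_p(X)` onto `C_p(Y)`. -/
def LDominates (X Y : Type*) [TopologicalSpace X] [TopologicalSpace Y] : Prop :=
  ∃ L : C(X, ℝ) →ₗ[ℝ] C(Y, ℝ), @Continuous _ _ (ptTop X) (ptTop Y) L ∧ Surjective L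

/-- Covering dimension at most `n`. -/
def CovDimLE (X : Type*) [TopologicalSpace X] (n : ℕ) : Prop :=
  ∀ (ι : Type) (U : ι → Set X), Finite ι → (∀ i, IsOpen (U i)) → (⋃ i, U i) = univ →
    ∃ V : ι → Set X, (∀ i, IsOpen (V i)) ∧ (∀ i, V i ⊆ U i) ∧ (⋃ i, V i) = univ ∧
      ∀ x : X, {i | x ∈ V i}.ncard ≤ n + 1

/-- Finite (covering) dimensional space. -/
def FinDimSpace (X : Type*) [TopologicalSpace X] : Prop := ∃ n : ℕ, CovDimLE X n

/-- Strongly countable dimensional space. -/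
def StronglyCountableDim (X : Type*) [TopologicalSpace X] : Prop :=
  ∃ F : ℕ → Set X, (∀ n, IsClosed (F n)) ∧ (∀ n, FinDimSpace ↥(F n)) ∧ (⋃ n, F n) = univ

/-- `I(S)` relative to a subset: points of `S` with a relatively open
finite dimensional neighbourhood in `S`. -/
def fdI (X : Type*) [TopologicalSpace X] (S : Set X) : Set X :=
  {x | x ∈ S ∧ ∃ U : Set X, IsOpen U ∧ x ∈ U ∧ FinDimSpace ↥(U ∩ S)}

/-- The transfinite derived sets `K^[α]`. -/
def fdDerived (X : Type*) [TopologicalSpace X] : Ordinal → Set X := fun o =>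
  Ordinal.limitRecOn o (univ : Set X)
    (fun _ S => S \ fdI X S)
    (fun o _ ih => ⋂ (o' : Ordinal) (h : o' < o), ih o' h)

/-- A k_ω sequence for `X`. -/
def IsKOmegaSeq (X : Type*) [TopologicalSpace X] (K : ℕ → Set X) : Prop :=
  (∀ n, IsCompact (K n)) ∧ (∀ n, K n ⊆ K (n + 1)) ∧
  (∀ C : Set X, IsCompact C → ∃ n, C ⊆ K n) ∧
  (∀ A : Set X, (∀ n, ∃ F : Set X, IsClosed F ∧ A ∩ K n = F ∩ K n) → IsClosed A)

def KOmegaSpace (X : Type*) [TopologicalSpace X] : Prop := ∃ K : ℕ → Set X, IsKOmegaSeq X K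

/-- Submetrizable: there is a coarser metrizable topology. -/
def Submetrizable (X : Type*) [TopologicalSpace X] : Prop :=
  ∃ t' : TopologicalSpace X, (∀ s : Set X, @IsOpen X t' s → IsOpen s) ∧
    @TopologicalSpace.MetrizableSpace X t'

def Hemicompact (X : Type*) [TopologicalSpace X] : Prop :=
  ∃ K : ℕ → Set X, (∀ n, IsCompact (K n)) ∧ ∀ C : Set X, IsCompact C → ∃ n, C ⊆ K n

/-- `B` is (functionally) bounded in `X`. -/
def CBounded (X : Type*) [TopologicalSpace X] (B : Set X) : Prop :=
  ∀ f : C(X, ℝ), ∃ M : ℝ, ∀ x ∈ B, |f x| ≤ M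

/-- μ-space: closed bounded subsets are compact. -/
def MuSpace (X : Type*) [TopologicalSpace X] : Prop :=
  ∀ B : Set X, IsClosed B → CBounded X B → IsCompact B

/-- `C(K; A)`: continuous functions vanishing on `A`, as a submodule. -/
def Czero (K : Type*) [TopologicalSpace K] (A : Set K) : Submodule ℝ C(K, ℝ) where
  carrier := {f | ∀ x ∈ A, f x = 0}
  add_mem' := by intro f g hf hg x hx; simp [hf x hx, hg x hx]
  zero_mem' := by intro x hx; simp
  smul_mem' := by intro c f hf x hx; simp [hf x hx]

/-- Pointwise topology on `C(K;A)`. -/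
def ptTopSub {K : Type*} [TopologicalSpace K] (A : Set K) :
    TopologicalSpace (Czero K A) :=
  TopologicalSpace.induced (fun f => (f : C(K, ℝ))) (ptTop K)

/-- `c`-good map between relative function spaces. -/
def IsCGood {K₁ K₂ : Type*} [TopologicalSpace K₁] [CompactSpace K₁]
    [TopologicalSpace K₂] [CompactSpace K₂] (A₁ : Set K₁) (A₂ : Set K₂) (c : ℝ)
    (L : Czero K₁ A₁ →ₗ[ℝ] Czero K₂ A₂) : Prop :=
  @Continuous _ _ (ptTopSub A₁) (ptTopSub A₂) L ∧
  (∀ g : Czero K₁ A₁, ‖(L g : C(K₂, ℝ))‖ ≤ ‖(g : C(K₁, ℝ))‖) ∧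
  (∀ f : Czero K₂ A₂, ∃ g : Czero K₁ A₁, L g = f ∧
    ‖(g : C(K₁, ℝ))‖ ≤ c * ‖(f : C(K₂, ℝ))‖)

/-- `c`-good map between full function spaces. -/
def IsCGoodMap {K₁ K₂ : Type*} [TopologicalSpace K₁] [CompactSpace K₁]
    [TopologicalSpace K₂] [CompactSpace K₂] (c : ℝ)
    (L : C(K₁, ℝ) →ₗ[ℝ] C(K₂, ℝ)) : Prop :=
  @Continuous _ _ (ptTop K₁) (ptTop K₂) L ∧
  (∀ g : C(K₁, ℝ), ‖L g‖ ≤ ‖g‖) ∧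
  (∀ f : C(K₂, ℝ), ∃ g : C(K₁, ℝ), L g = f ∧ ‖g‖ ≤ c * ‖f‖)


namespace FdH

set_option linter.unusedSectionVars false
set_option linter.unusedVariables false

section Scarf
variable {S I L : Type} [Fintype S] [DecidableEq S] [Fintype I] [DecidableEq I] [LinearOrder L]

def Dom (r : I → S → L) (X : Finset S) (C : Finset I) : Prop :=
  ∀ s, ∃ i ∈ C, ∀ x ∈ X, r i s ≤ r i x

lemma Dom.mono {r : I → S → L} {X X' : Finset S} {C C' : Finset I} (h : Dom r X C)
    (hX : X' ⊆ X) (hC : C ⊆ C') : Dom r X' C' := by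
  intro s
  obtain ⟨i, hi, h⟩ := h s
  exact ⟨i, hC hi, fun x hx => h x (hX hx)⟩

lemma card_two {α β : Type} [DecidableEq α] [DecidableEq β] (f : α → β) (C : Finset α)
    (B : Finset β) (h : C.image f = B) (hc : C.card = B.card + 1) :
    (C.filter (fun k => (C.erase k).image f = B)).card = 2 := by
  have hlt : (C.image f).card < C.card := by rw [h]; omega
  obtain ⟨i, hi, j, hj, hij, hf⟩ : ∃ i ∈ C, ∃ j ∈ C, i ≠ j ∧ f i = f j := by
    by_contra hcon
    push Not at hcon
    have : (C.image f).card = C.card := by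
      apply Finset.card_image_of_injOn
      intro a ha b hb hab
      by_contra hne
      exact hcon a ha b hb hne hab
    omega
  have key : ∀ a b, a ∈ C → b ∈ C → a ≠ b → f a = f b → (C.erase a).image f = B := by
    intro a b ha hb hab hfab
    rw [← h]
    apply Finset.Subset.antisymm
    · exact Finset.image_subset_image (Finset.erase_subset _ _)
    · intro y hy
      obtain ⟨z, hz, rfl⟩ := Finset.mem_image.1 hy
      by_cases hza : z = a
      · subst hza
        rw [hfab]
        exact Finset.mem_image_of_mem _ (Finset.mem_erase.2 ⟨hab.symm, hb⟩)
      · exact Finset.mem_image_of_mem _ (Finset.mem_erase.2 ⟨hza, hz⟩)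
  have : C.filter (fun k => (C.erase k).image f = B) = {i, j} := by
    ext k
    simp only [Finset.mem_filter, Finset.mem_insert, Finset.mem_singleton]
    constructor
    · rintro ⟨hk, him⟩
      by_contra hne
      push Not at hne
      have hinj : Set.InjOn f (C.erase k : Finset α) := by
        apply Finset.card_image_iff.1
        rw [him, Finset.card_erase_of_mem hk]; omega
      exact hij (hinj (by simp [hi, hne.1.symm]) (by simp [hj, hne.2.symm]) hf)
    · rintro (rfl | rfl)
      · exact ⟨hi, key _ _ hi hj hij hf⟩
      · exact ⟨hj, key _ _ hj hi hij.symm hf.symm⟩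
  rw [this, Finset.card_pair hij]

def Rel (d q : Finset S × Finset I) : Prop := d.1 ⊆ q.1 ∧ q.2 ⊆ d.2

def IsRoom (r : I → S → L) (q : Finset S × Finset I) : Prop :=
  Dom r q.1 q.2 ∧ q.1.card = q.2.card

def IsDoor (r : I → S → L) (c : S → I) (i0 : I) (d : Finset S × Finset I) : Prop :=
  Dom r d.1 d.2 ∧ d.1.card + 1 = d.2.card ∧ i0 ∈ d.2 ∧ d.1.image c = d.2.erase i0

def TT (r : I → S → L) (X : Finset S) (C : Finset I) (k : I) (q : Finset S × Finset I) : Prop :=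
  q = (X, C.erase k) ∨ ∃ x, x ∉ X ∧ q = (insert x X, C) ∧
    ∀ k' ∈ C.erase k, ∃ y ∈ X, r k' y < r k' x

def Onto (r : I → S → L) (X : Finset S) (C : Finset I) (k : I) : Prop :=
  ∀ y ∈ X, ∃ k' ∈ C.erase k, ∀ z ∈ X, r k' y ≤ r k' z

lemma exists_TT (r : I → S → L) (hr : ∀ i, Injective (r i)) (X : Finset S) (C : Finset I)
    (hD : Dom r X C) (hc : X.card + 1 = C.card) (k : I) (hk : k ∈ C) (ho : Onto r X C k) :
    ∃ q, IsRoom r q ∧ Rel (X, C) q ∧ TT r X C k q ∧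
      ∀ q', IsRoom r q' → TT r X C k q' → q' = q := by
  classical
  set M : Finset S := Finset.univ.filter
    (fun s => ∀ k' ∈ C.erase k, ∃ y ∈ X, r k' y < r k' s) with hM
  have memM : ∀ s, s ∈ M ↔ ∀ k' ∈ C.erase k, ∃ y ∈ X, r k' y < r k' s := by
    intro s; simp [hM]
  have notM : ∀ s, s ∉ M → ∃ k' ∈ C.erase k, ∀ y ∈ X, r k' s ≤ r k' y := by
    intro s hs
    rw [memM] at hs
    push Not at hs
    exact hs
  rcases M.eq_empty_or_nonempty with hE | hN
  · have hD' : Dom r X (C.erase k) := by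
      intro s
      exact notM s (by simp [hE])
    refine ⟨(X, C.erase k), ⟨hD', ?_⟩, ⟨Finset.Subset.refl _, Finset.erase_subset _ _⟩,
      Or.inl rfl, ?_⟩
    · simp only [Finset.card_erase_of_mem hk]; omega
    · rintro q' - (rfl | ⟨x, hx, rfl, h⟩)
      · rfl
      · exfalso
        have := (memM x).2 h
        simp [hE] at this
  · obtain ⟨x, hxM, hmax⟩ := M.exists_max_image (r k) hN
    have hx := (memM x).1 hxM
    have hxX : x ∉ X := by
      intro hxX
      obtain ⟨k', hk', h⟩ := ho x hxX
      obtain ⟨y, hy, hlt⟩ := hx k' hk'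
      exact absurd (h y hy) (not_le.2 hlt)
    refine ⟨(insert x X, C), ⟨?_, ?_⟩, ⟨Finset.subset_insert _ _, Finset.Subset.refl _⟩,
      Or.inr ⟨x, hxX, rfl, hx⟩, ?_⟩
    · intro s
      by_cases hs : s ∈ M
      · refine ⟨k, hk, ?_⟩
        obtain ⟨k', hk', h⟩ := hD s
        have : k' = k := by
          by_contra hne
          obtain ⟨y, hy, hlt⟩ := (memM s).1 hs k' (Finset.mem_erase.2 ⟨hne, hk'⟩)
          exact absurd (h y hy) (not_le.2 hlt)
        subst this
        intro y hy
        rcases Finset.mem_insert.1 hy with rfl | hy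
        · exact hmax s hs
        · exact h y hy
      · obtain ⟨k', hk', h⟩ := notM s hs
        refine ⟨k', Finset.mem_of_mem_erase hk', ?_⟩
        intro y hy
        rcases Finset.mem_insert.1 hy with rfl | hy
        · obtain ⟨z, hz, hlt⟩ := hx k' hk'
          exact (h z hz).trans hlt.le
        · exact h y hy
    · simp only [Finset.card_insert_of_notMem hxX]; omega
    · rintro q' ⟨hd, -⟩ (rfl | ⟨x', hx', rfl, h⟩)
      · exfalso
        obtain ⟨k', hk', h⟩ := hd x
        obtain ⟨z, hz, hlt⟩ := hx k' hk'
        exact absurd (h z hz) (not_le.2 hlt)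
      · obtain ⟨k', hk', h2⟩ := hd x
        have : k' = k := by
          by_contra hne
          obtain ⟨y, hy, hlt⟩ := hx k' (Finset.mem_erase.2 ⟨hne, hk'⟩)
          exact absurd (h2 y (Finset.mem_insert_of_mem hy)) (not_le.2 hlt)
        subst this
        have h3 := h2 x' (Finset.mem_insert_self _ _)
        have h4 := hmax x' ((memM x').2 h)
        rw [hr _ (le_antisymm h3 h4)]

lemma TT_inj (r : I → S → L) (X : Finset S) (C : Finset I)
    (hD : Dom r X C) (k k' : I) (hk : k ∈ C) (hk' : k' ∈ C) (q : Finset S × Finset I)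
    (h : TT r X C k q) (h' : TT r X C k' q) : k = k' := by
  rcases h with rfl | ⟨x, hx, rfl, h⟩
  · rcases h' with h' | ⟨x', hx', h', -⟩
    · have h2 := (Prod.ext_iff.1 h').2
      by_contra hne
      have : k' ∈ C.erase k := Finset.mem_erase.2 ⟨fun h => hne h.symm, hk'⟩
      simp only at h2
      rw [h2] at this
      simp at this
    · exfalso
      have h2 := (Prod.ext_iff.1 h').1
      simp only at h2
      exact hx' (h2 ▸ Finset.mem_insert_self _ _)
  · rcases h' with h' | ⟨x', hx', h', h2⟩
    · exfalso
      have h2 := (Prod.ext_iff.1 h').1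
      simp only at h2
      exact hx (h2 ▸ Finset.mem_insert_self _ _)
    · by_contra hne
      have h3 := (Prod.ext_iff.1 h').1
      simp only at h3
      have hxx : x = x' := by
        have : x ∈ insert x' X := h3 ▸ Finset.mem_insert_self _ _
        rcases Finset.mem_insert.1 this with h | h
        · exact h
        · exact absurd h hx
      subst hxx
      obtain ⟨l, hl, h4⟩ := hD x
      have : ∃ y ∈ X, r l y < r l x := by
        by_cases hlk : l = k
        · exact h2 l (Finset.mem_erase.2 ⟨fun e => hne (hlk ▸ e), hl⟩)
        · exact h l (Finset.mem_erase.2 ⟨hlk, hl⟩)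
      obtain ⟨y, hy, hlt⟩ := this
      exact absurd (h4 y hy) (not_le.2 hlt)

lemma eq_insert_of_card {α : Type} [DecidableEq α] {A B : Finset α} (h : A ⊆ B)
    (hc : B.card = A.card + 1) : ∃ x, x ∉ A ∧ B = insert x A := by
  have : (B \ A).card = 1 := by rw [Finset.card_sdiff_of_subset h]; omega
  obtain ⟨x, hx⟩ := Finset.card_eq_one.1 this
  have hx' : x ∈ B \ A := by simp [hx]
  refine ⟨x, (Finset.mem_sdiff.1 hx').2, ?_⟩
  ext y
  have : y ∈ B \ A ↔ y = x := by simp [hx]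
  rw [Finset.mem_sdiff] at this
  rw [Finset.mem_insert]
  have := @h y
  tauto

lemma room_TT (r : I → S → L) (hr : ∀ i, Injective (r i)) (X : Finset S) (C : Finset I)
    (hc : X.card + 1 = C.card) (q : Finset S × Finset I)
    (hq : IsRoom r q) (hR : Rel (X, C) q) : ∃ k ∈ C, Onto r X C k ∧ TT r X C k q := by
  obtain ⟨Y, E⟩ := q
  obtain ⟨hd, hcard⟩ := hq
  obtain ⟨h1, h2⟩ := hR
  simp only at hd hcard h1 h2
  have l1 := Finset.card_le_card h1
  have l2 := Finset.card_le_card h2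
  by_cases hY : Y = X
  · subst hY
    obtain ⟨k, hk, hk2⟩ := eq_insert_of_card h2 (by omega)
    have hE : E = C.erase k := by rw [hk2, Finset.erase_insert hk]
    refine ⟨k, by simp [hk2], ?_, Or.inl (by rw [hE])⟩
    rw [hE] at hd
    intro y hy
    exact hd y
  · have hlt : X.card < Y.card := Finset.card_lt_card (Finset.ssubset_iff_subset_ne.2 ⟨h1, fun h => hY h.symm⟩)
    have hE : E = C := Finset.eq_of_subset_of_card_le h2 (by omega)
    subst hE
    obtain ⟨x, hx, rfl⟩ := eq_insert_of_card h1 (by omega)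
    obtain ⟨k0, hk0, h3⟩ := hd x
    have ne : ∀ y ∈ X, y ≠ x := fun y hy e => hx (e ▸ hy)
    have step : ∀ k ∈ E, (∀ y ∈ X, r k x ≤ r k y) → ∀ y ∈ X, ∀ k', (∀ z ∈ insert x X, r k' y ≤ r k' z) →
        k' ≠ k := by
      rintro k hk h y hy k' h' rfl
      exact ne y hy (hr _ (le_antisymm (h' x (Finset.mem_insert_self _ _)) (h y hy)))
    have h3' : ∀ y ∈ X, r k0 x ≤ r k0 y := fun y hy => h3 y (Finset.mem_insert_of_mem hy)
    refine ⟨k0, hk0, ?_, Or.inr ⟨x, hx, rfl, ?_⟩⟩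
    · intro y hy
      obtain ⟨k', hk', h4⟩ := hd y
      exact ⟨k', Finset.mem_erase.2 ⟨step k0 hk0 h3' y hy k' h4, hk'⟩,
        fun z hz => h4 z (Finset.mem_insert_of_mem hz)⟩
    · intro k hk
      by_contra hcon
      push Not at hcon
      choose g hg1 hg2 using hd
      have : X.card ≤ ((E.erase k0).erase k).card := by
        apply Finset.card_le_card_of_injOn g
        · intro y hy
          have hy : y ∈ X := hy
          have : g y ∈ (E.erase k0).erase k := by
            rw [Finset.mem_erase, Finset.mem_erase]
            exact ⟨step k (Finset.mem_of_mem_erase hk) hcon y hy _ (hg2 y),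
              step k0 hk0 h3' y hy _ (hg2 y), hg1 y⟩
          exact this
        · intro y hy z hz hyz
          have hy : y ∈ X := hy
          have hz : z ∈ X := hz
          have a := hg2 y z (Finset.mem_insert_of_mem hz)
          have b := hg2 z y (Finset.mem_insert_of_mem hy)
          rw [← hyz] at b
          exact hr _ (le_antisymm a b)
      rw [Finset.card_erase_of_mem hk, Finset.card_erase_of_mem hk0] at this
      have : 0 < (E.erase k0).card := Finset.card_pos.2 ⟨k, hk⟩
      rw [Finset.card_erase_of_mem hk0] at this
      omega

open Classical in
lemma onto_card (r : I → S → L) (hr : ∀ i, Injective (r i)) (X : Finset S) (C : Finset I)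
    (hD : Dom r X C) (hc : X.card + 1 = C.card) (hX : X.Nonempty) :
    (C.filter (Onto r X C)).card = 2 := by
  have : ∀ k, ∃ x ∈ X, ∀ z ∈ X, r k x ≤ r k z := fun k => X.exists_min_image (r k) hX
  choose a ha1 ha2 using this
  have huniq : ∀ k, ∀ y ∈ X, (∀ z ∈ X, r k y ≤ r k z) → a k = y := by
    intro k y hy h
    exact hr k (le_antisymm (ha2 k y hy) (h _ (ha1 k)))
  have h1 : C.image a = X := by
    ext y
    rw [Finset.mem_image]
    constructor
    · rintro ⟨k, hk, rfl⟩
      exact ha1 k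
    · intro hy
      obtain ⟨k, hk, h⟩ := hD y
      exact ⟨k, hk, huniq k y hy h⟩
  rw [← card_two a C X h1 hc.symm]
  congr 1
  apply Finset.filter_congr
  intro k hk
  constructor
  · intro h
    ext y
    rw [Finset.mem_image]
    constructor
    · rintro ⟨k, hk, rfl⟩
      exact ha1 k
    · intro hy
      obtain ⟨k, hk, h⟩ := h y hy
      exact ⟨k, hk, huniq k y hy h⟩
  · intro h y hy
    rw [← h, Finset.mem_image] at hy
    obtain ⟨k', hk', rfl⟩ := hy
    exact ⟨k', hk', ha2 k'⟩

open Classical in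
lemma rooms_card (r : I → S → L) (hr : ∀ i, Injective (r i)) (X : Finset S) (C : Finset I)
    (hD : Dom r X C) (hc : X.card + 1 = C.card) (hX : X.Nonempty) :
    (Finset.univ.filter (fun q => IsRoom r q ∧ Rel (X, C) q)).card = 2 := by
  rw [← onto_card r hr X C hD hc hX]
  symm
  have := fun k (h : k ∈ C.filter (Onto r X C)) =>
    exists_TT r hr X C hD hc k (Finset.mem_filter.1 h).1 (Finset.mem_filter.1 h).2
  choose F h1 h2 h3 h4 using this
  apply Finset.card_bij F
  · intro k hk
    simp only [Finset.mem_filter, Finset.mem_univ, true_and]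
    exact ⟨h1 k hk, h2 k hk⟩
  · intro k hk k' hk' he
    exact TT_inj r X C hD k k' (Finset.mem_filter.1 hk).1 (Finset.mem_filter.1 hk').1 _
      (h3 k hk) (he ▸ h3 k' hk')
  · intro q hq
    simp only [Finset.mem_filter, Finset.mem_univ, true_and] at hq
    obtain ⟨k, hk, ho, ht⟩ := room_TT r hr X C hc q hq.1 hq.2
    exact ⟨k, Finset.mem_filter.2 ⟨hk, ho⟩, (h4 k _ q hq.1 ht).symm⟩

open Classical in
lemma rooms_card_empty (r : I → S → L) (hr : ∀ i, Injective (r i)) [Nonempty S] (i0 : I) :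
    (Finset.univ.filter (fun q => IsRoom r q ∧ Rel ((∅ : Finset S), ({i0} : Finset I)) q)).card = 1 := by
  obtain ⟨x, -, hx⟩ := (Finset.univ : Finset S).exists_max_image (r i0) Finset.univ_nonempty
  rw [Finset.card_eq_one]
  refine ⟨({x}, {i0}), ?_⟩
  ext ⟨Y, E⟩
  simp only [Finset.mem_filter, Finset.mem_univ, true_and, Finset.mem_singleton]
  constructor
  · rintro ⟨⟨hd, hc⟩, -, h⟩
    simp only at hd hc h
    rcases Finset.subset_singleton_iff.1 h with rfl | rfl
    · obtain ⟨i, hi, -⟩ := hd x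
      simp at hi
    · rw [Finset.card_singleton] at hc
      obtain ⟨y, rfl⟩ := Finset.card_eq_one.1 hc
      obtain ⟨i, hi, h7⟩ := hd x
      rw [Finset.mem_singleton] at hi
      subst hi
      have := h7 y (by simp)
      rw [hr _ (le_antisymm this (hx y (Finset.mem_univ _)))]
  · intro h
    cases h
    refine ⟨⟨?_, by simp⟩, by simp, by simp⟩
    intro s
    exact ⟨i0, by simp, by intro y hy; rw [Finset.mem_singleton] at hy; subst hy; exact hx s (Finset.mem_univ _)⟩

open Classical in
lemma doors_even (r : I → S → L) (c : S → I) (i0 : I) (q : Finset S × Finset I)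
    (hq : IsRoom r q) (hne : q.1.image c ≠ q.2) :
    Even (Finset.univ.filter (fun d => IsDoor r c i0 d ∧ Rel d q)).card := by
  obtain ⟨X, C⟩ := q
  obtain ⟨hd, hcard⟩ := hq
  simp only at hd hcard hne
  -- shape of doors
  have shape : ∀ d : Finset S × Finset I, IsDoor r c i0 d ∧ Rel d (X, C) ↔
      (∃ y ∈ X, i0 ∈ C ∧ (X.erase y).image c = C.erase i0 ∧ d = (X.erase y, C)) ∨
      (∃ i, i ∉ C ∧ i0 ∈ C ∧ X.image c = insert i (C.erase i0) ∧ d = (X, insert i C)) := by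
    rintro ⟨Y, E⟩
    constructor
    · rintro ⟨⟨h1, h2, h3, h4⟩, h5, h6⟩
      simp only at h1 h2 h3 h4 h5 h6
      have l1 := Finset.card_le_card h5
      have l2 := Finset.card_le_card h6
      by_cases hE : E = C
      · subst hE
        left
        obtain ⟨y, hy, rfl⟩ := eq_insert_of_card h5 (by omega)
        exact ⟨y, by simp, h3, by rw [Finset.erase_insert hy, h4], by rw [Finset.erase_insert hy]⟩
      · right
        have : C.card < E.card := Finset.card_lt_card (Finset.ssubset_iff_subset_ne.2 ⟨h6, fun h => hE h.symm⟩)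
        have hY : Y = X := Finset.eq_of_subset_of_card_le h5 (by omega)
        subst hY
        obtain ⟨i, hi, rfl⟩ := eq_insert_of_card h6 (by omega)
        have hii : i ≠ i0 := by
          rintro rfl
          rw [Finset.erase_insert hi] at h4
          exact hne h4
        refine ⟨i, hi, ?_, ?_, rfl⟩
        · rcases Finset.mem_insert.1 h3 with h | h
          · exact absurd h.symm hii
          · exact h
        · rw [h4, Finset.erase_insert_of_ne hii]
    · rintro (⟨y, hy, h0, h1, h2⟩ | ⟨i, hi, h0, h1, h2⟩)
      · cases h2
        have : 0 < X.card := Finset.card_pos.2 ⟨y, hy⟩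
        exact ⟨⟨hd.mono (Finset.erase_subset _ _) (Finset.Subset.refl _),
          by simp only [Finset.card_erase_of_mem hy]; omega, h0, h1⟩, Finset.erase_subset _ _, Finset.Subset.refl _⟩
      · cases h2
        have hii : i ≠ i0 := fun e => hi (e ▸ h0)
        exact ⟨⟨hd.mono (Finset.Subset.refl _) (Finset.subset_insert _ _),
          by simp only [Finset.card_insert_of_notMem hi]; omega, Finset.mem_insert_of_mem h0,
          by simp only; rw [h1, Finset.erase_insert_of_ne hii]⟩, Finset.Subset.refl _, Finset.subset_insert _ _⟩
  by_cases h0 : i0 ∈ C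
  swap
  · rw [Finset.filter_false_of_mem]
    · simp
    · intro d _ h
      rcases (shape d).1 h with ⟨_, _, h, _⟩ | ⟨_, _, h, _⟩ <;> exact h0 h
  have hCpos : 0 < C.card := Finset.card_pos.2 ⟨i0, h0⟩
  by_cases hA : X.image c = C.erase i0
  · have h2 := card_two c X (C.erase i0) hA (by rw [Finset.card_erase_of_mem h0]; omega)
    have : (Finset.univ.filter (fun d => IsDoor r c i0 d ∧ Rel d (X, C))) =
      (X.filter (fun k => (X.erase k).image c = C.erase i0)).image (fun y => (X.erase y, C)) := by
      ext d
      rw [Finset.mem_filter, shape, Finset.mem_image]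
      constructor
      · rintro ⟨-, ⟨y, hy, -, h, rfl⟩ | ⟨i, hi, -, h, rfl⟩⟩
        · exact ⟨y, Finset.mem_filter.2 ⟨hy, h⟩, rfl⟩
        · exfalso
          have : i ∈ C.erase i0 := by rw [← hA, h]; simp
          exact hi (Finset.mem_of_mem_erase this)
      · rintro ⟨y, hy, rfl⟩
        rw [Finset.mem_filter] at hy
        exact ⟨Finset.mem_univ _, Or.inl ⟨y, hy.1, h0, hy.2, rfl⟩⟩
    rw [this, Finset.card_image_of_injOn, h2]
    · exact even_two
    · intro y hy z hz h
      simp only [Prod.mk.injEq, and_true] at h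
      have hy : y ∈ X := (Finset.mem_filter.1 hy).1
      exact (Finset.erase_injOn X) hy ((Finset.mem_filter.1 hz).1) h
  by_cases hB : ∃ i, i ∉ C ∧ X.image c = insert i (C.erase i0)
  · obtain ⟨i, hi, him⟩ := hB
    have hie : i ∉ C.erase i0 := fun h => hi (Finset.mem_of_mem_erase h)
    have hinj : Set.InjOn c X := by
      apply Finset.card_image_iff.1
      rw [him, Finset.card_insert_of_notMem hie, Finset.card_erase_of_mem h0]; omega
    obtain ⟨y, hy, hyi⟩ : ∃ y ∈ X, c y = i := by
      have : i ∈ X.image c := by rw [him]; simp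
      simpa using this
    have himY : (X.erase y).image c = C.erase i0 := by
      ext j
      constructor
      · intro hj
        obtain ⟨z, hz, rfl⟩ := Finset.mem_image.1 hj
        rw [Finset.mem_erase] at hz
        have : c z ∈ insert i (C.erase i0) := by rw [← him]; exact Finset.mem_image_of_mem _ hz.2
        rcases Finset.mem_insert.1 this with h | h
        · exact absurd (hinj hz.2 hy (h.trans hyi.symm)) hz.1
        · exact h
      · intro hj
        have : j ∈ X.image c := by rw [him]; exact Finset.mem_insert_of_mem hj
        obtain ⟨z, hz, rfl⟩ := Finset.mem_image.1 this
        refine Finset.mem_image_of_mem _ (Finset.mem_erase.2 ⟨?_, hz⟩)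
        rintro rfl
        exact hie (hyi ▸ hj)
    have : (Finset.univ.filter (fun d => IsDoor r c i0 d ∧ Rel d (X, C))) =
      {(X.erase y, C), (X, insert i C)} := by
      ext d
      rw [Finset.mem_filter, shape, Finset.mem_insert, Finset.mem_singleton]
      constructor
      · rintro ⟨-, ⟨z, hz, -, h, rfl⟩ | ⟨j, hj, -, h, rfl⟩⟩
        · left
          by_cases hzy : z = y
          · rw [hzy]
          · exfalso
            have : i ∈ C.erase i0 := by
              rw [← h, ← hyi]
              exact Finset.mem_image_of_mem _ (Finset.mem_erase.2 ⟨fun e => hzy e.symm, hy⟩)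
            exact hie this
        · right
          have : i ∈ insert j (C.erase i0) := by rw [← h, him]; simp
          rcases Finset.mem_insert.1 this with h | h
          · rw [h]
          · exact absurd h hie
      · rintro (rfl | rfl)
        · exact ⟨Finset.mem_univ _, Or.inl ⟨y, hy, h0, himY, rfl⟩⟩
        · exact ⟨Finset.mem_univ _, Or.inr ⟨i, hi, h0, him, rfl⟩⟩
    rw [this, Finset.card_pair]
    · exact even_two
    · intro h
      have h := (Prod.ext_iff.1 h).2
      simp only at h
      exact hi (h ▸ Finset.mem_insert_self _ _)
  · rw [Finset.filter_false_of_mem]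
    · simp
    · intro d _ h
      rcases (shape d).1 h with ⟨y, hy, _, h, _⟩ | ⟨i, hi, _, h, _⟩
      · have hX : X.image c = insert (c y) (C.erase i0) := by
          rw [← h, ← Finset.image_insert, Finset.insert_erase hy]
        by_cases hcy : c y ∈ C
        · by_cases hcy0 : c y = i0
          · rw [hcy0, Finset.insert_erase h0] at hX
            exact hne hX
          · rw [Finset.insert_eq_of_mem (Finset.mem_erase.2 ⟨hcy0, hcy⟩)] at hX
            exact hA hX
        · exact hB ⟨_, hcy, hX⟩
      · exact hB ⟨i, hi, h⟩

theorem scarf (r : I → S → L) (hr : ∀ i, Injective (r i)) [Nonempty S] [Nonempty I] (c : S → I) :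
    ∃ (X : Finset S) (C : Finset I), Dom r X C ∧ X.image c = C := by
  classical
  by_contra hcon
  push Not at hcon
  obtain ⟨i0⟩ := ‹Nonempty I›
  set D := (Finset.univ : Finset (Finset S × Finset I)).filter (IsDoor r c i0) with hDdef
  set R := (Finset.univ : Finset (Finset S × Finset I)).filter (IsRoom r) with hRdef
  have hsum := Finset.sum_card_bipartiteAbove_eq_sum_card_bipartiteBelow (s := D) (t := R) Rel
  have hR : Even (∑ q ∈ R, (Finset.bipartiteBelow Rel D q).card) := by
    apply Finset.even_sum
    intro q hq
    have hq' : IsRoom r q := (Finset.mem_filter.1 hq).2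
    have := doors_even r c i0 q hq' (hcon q.1 q.2 hq'.1)
    rwa [Finset.bipartiteBelow, hDdef, Finset.filter_filter]
  have h0 : ((∅, {i0}) : Finset S × Finset I) ∈ D := by
    rw [hDdef, Finset.mem_filter]
    refine ⟨Finset.mem_univ _, ?_, by simp, by simp, by simp⟩
    intro s
    exact ⟨i0, by simp, by simp⟩
  rw [← hsum, ← Finset.add_sum_erase _ _ h0] at hR
  have h1 : (Finset.bipartiteAbove Rel R ((∅, {i0}) : Finset S × Finset I)).card = 1 := by
    rw [Finset.bipartiteAbove, hRdef, Finset.filter_filter]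
    exact rooms_card_empty r hr i0
  have h2 : Even (∑ d ∈ D.erase (∅, {i0}), (Finset.bipartiteAbove Rel R d).card) := by
    apply Finset.even_sum
    rintro ⟨X, C⟩ hd
    rw [Finset.mem_erase, hDdef, Finset.mem_filter] at hd
    obtain ⟨hne, -, h3, h4, h5, h6⟩ := hd
    simp only at h3 h4 h5 h6
    rw [Finset.bipartiteAbove, hRdef, Finset.filter_filter]
    have := rooms_card r hr X C h3 h4 (by
      rw [Finset.nonempty_iff_ne_empty]
      rintro rfl
      apply hne
      simp only [Finset.card_empty, zero_add] at h4
      obtain ⟨j, rfl⟩ := Finset.card_eq_one.1 h4.symm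
      rw [Finset.mem_singleton] at h5
      rw [h5])
    rw [this]
    exact even_two
  rw [h1] at hR
  rw [Nat.even_add] at hR
  simp [h2] at hR

end Scarf

section KKM

def Grid (n N : ℕ) : Type := {a : Fin (n+1) → Fin (N+1) // ∑ i, (a i : ℕ) = N}

instance (n N : ℕ) : Fintype (Grid n N) := by
  classical
  unfold Grid
  infer_instance

instance (n N : ℕ) : DecidableEq (Grid n N) := Classical.decEq _

def gr (n N : ℕ) (i : Fin (n+1)) (a : Grid n N) : ℕ ×ₗ Fin (Fintype.card (Grid n N)) :=
  toLex ((a.1 i : ℕ), Fintype.equivFin _ a)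

lemma gr_inj (n N : ℕ) (i : Fin (n+1)) : Injective (gr n N i) := by
  intro a b h
  have h2 : ((a.1 i : ℕ), Fintype.equivFin _ a) = ((b.1 i : ℕ), Fintype.equivFin _ b) :=
    toLex.injective h
  exact (Fintype.equivFin _).injective (Prod.ext_iff.1 h2).2

lemma gr_le (n N : ℕ) (i : Fin (n+1)) (a b : Grid n N) (h : gr n N i a ≤ gr n N i b) :
    (a.1 i : ℕ) ≤ b.1 i := by
  unfold gr at h
  rw [Prod.Lex.toLex_le_toLex] at h
  rcases h with h | h
  · exact h.le
  · exact h.1.le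

lemma grid_est (n N : ℕ) (X : Finset (Grid n N)) (C : Finset (Fin (n+1)))
    (hD : Dom (gr n N) X C) (hX : X.Nonempty) :
    (∀ a ∈ X, ∀ j, j ∉ C → (a.1 j : ℕ) ≤ n) ∧
    (∀ a ∈ X, ∀ b ∈ X, ∀ i, (a.1 i : ℕ) ≤ b.1 i + n) := by
  have : ∀ i, ∃ b ∈ X, ∀ a ∈ X, (b.1 i : ℕ) ≤ a.1 i :=
    fun i => X.exists_min_image (fun a => (a.1 i : ℕ)) hX
  choose b hb1 hb2 using this
  set m : Fin (n+1) → ℕ := fun i => ((b i).1 i : ℕ) with hm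
  have hm2 : ∀ i, ∀ a ∈ X, m i ≤ a.1 i := hb2
  have hkey : N < ∑ i ∈ C, (m i + 1) := by
    by_contra hle
    push Not at hle
    obtain ⟨x0, hx0⟩ := hX
    obtain ⟨i1, hi1, -⟩ := hD x0
    set T := ∑ i ∈ C, (m i + 1) with hT
    set s : Fin (n+1) → ℕ := fun i =>
      (if i ∈ C then m i + 1 else 0) + (if i = i1 then N - T else 0) with hs
    have hsum : ∑ i, s i = N := by
      rw [hs, Finset.sum_add_distrib, Finset.sum_ite_mem, Finset.univ_inter,
        Finset.sum_ite_eq' Finset.univ i1]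
      simp only [Finset.mem_univ, if_true]
      omega
    have hsle : ∀ i, s i < N + 1 := by
      intro i
      have := Finset.single_le_sum (f := s) (fun i _ => Nat.zero_le _) (Finset.mem_univ i)
      omega
    let p : Grid n N := ⟨fun i => ⟨s i, hsle i⟩, hsum⟩
    obtain ⟨i, hi, h⟩ := hD p
    have h1 : s i ≤ m i := gr_le n N i p (b i) (h (b i) (hb1 i))
    simp only [hs, hi, if_true] at h1
    omega
  have hcard : C.card ≤ n + 1 := by
    simpa using Finset.card_le_univ C
  rw [Finset.sum_add_distrib] at hkey
  simp only [Finset.sum_const, smul_eq_mul, mul_one] at hkey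
  have hle : ∀ a ∈ X, ∑ i ∈ C, m i ≤ ∑ i ∈ C, (a.1 i : ℕ) :=
    fun a ha => Finset.sum_le_sum (fun i _ => hm2 i a ha)
  have h1 : ∀ a ∈ X, ∀ j, j ∉ C → (a.1 j : ℕ) ≤ n := by
    intro a ha j hj
    have h1 : ∑ i ∈ insert j C, (a.1 i : ℕ) ≤ ∑ i, (a.1 i : ℕ) :=
      Finset.sum_le_sum_of_subset (Finset.subset_univ _)
    rw [Finset.sum_insert hj, a.2] at h1
    have := hle a ha
    omega
  refine ⟨h1, ?_⟩
  intro a ha b' hb' i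
  by_cases hi : i ∈ C
  · have h2 : ∑ i ∈ C, (a.1 i : ℕ) ≤ ∑ i, (a.1 i : ℕ) :=
      Finset.sum_le_sum_of_subset (Finset.subset_univ _)
    rw [a.2] at h2
    have h3 : ∑ i ∈ C.erase i, m i ≤ ∑ i ∈ C.erase i, (a.1 i : ℕ) :=
      Finset.sum_le_sum (fun i _ => hm2 i a ha)
    rw [← Finset.add_sum_erase _ _ hi] at h2
    rw [← Finset.add_sum_erase _ _ hi] at hkey
    have := hm2 i b' hb'
    omega
  · have := h1 a ha i hi
    omega

open Fin.NatCast Fin.CommRing in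
lemma fin_closed (n : ℕ) (C : Finset (Fin (n+1))) (hC : C.Nonempty)
    (h : ∀ j, j + 1 ∈ C → j ∈ C) (j : Fin (n+1)) : j ∈ C := by
  obtain ⟨i, hi⟩ := hC
  have key : ∀ k : ℕ, i - (k : Fin (n+1)) ∈ C := by
    intro k
    induction k with
    | zero => simpa using hi
    | succ k ih =>
      apply h
      convert ih using 1
      push_cast
      ring
  have := key ((i - j : Fin (n+1)) : ℕ)
  rw [Fin.cast_val_eq_self] at this
  simpa using this

abbrev Simp (n : ℕ) := ↥(stdSimplex ℝ (Fin (n+1)))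

def gp (n N : ℕ) (hN : 0 < N) (a : Grid n N) : Simp n :=
  ⟨fun i => ((a.1 i : ℕ) : ℝ) / N, by
    constructor
    · intro i; positivity
    · have : (N : ℝ) ≠ 0 := by positivity
      rw [← Finset.sum_div, ← Nat.cast_sum, a.2, div_self this]⟩

instance (n N : ℕ) : Nonempty (Grid n N) :=
  ⟨⟨fun i => if i = 0 then ⟨N, by omega⟩ else 0, by
    rw [Finset.sum_eq_single 0]
    · simp
    · intro b _ hb; simp [hb]
    · simp⟩⟩

theorem kkm (n : ℕ) (F : Fin (n+1) → Set (Simp n)) (hF : ∀ i, IsClosed (F i))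
    (hcov : (⋃ i, F i) = univ) (hpos : ∀ i, ∀ x ∈ F i, 0 < x.1 i) :
    ∃ x, ∀ i, x ∈ F i := by
  by_contra hcon
  push Not at hcon
  have hlim : Filter.Tendsto (fun N : ℕ => (n : ℝ) / N) Filter.atTop (nhds 0) :=
    tendsto_const_div_atTop_nhds_zero_nat _
  have e1 : ∀ i, ∀ᶠ N : ℕ in Filter.atTop, ∀ x ∈ F i, (n : ℝ) / N < x.1 i := by
    intro i
    rcases (F i).eq_empty_or_nonempty with h | h
    · simp [h]
    · obtain ⟨x, hx, hmin⟩ := (hF i).isCompact.exists_isMinOn h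
        (f := fun x : Simp n => x.1 i)
        ((continuous_apply i).comp continuous_subtype_val).continuousOn
      filter_upwards [hlim.eventually (gt_mem_nhds (hpos i x hx))] with N hN y hy
      exact hN.trans_le (hmin hy)
  have e1' := Filter.eventually_all.2 e1
  obtain ⟨δ, hδ, hleb⟩ := lebesgue_number_lemma_of_metric (isCompact_univ (X := Simp n))
    (c := fun i => (F i)ᶜ) (fun i => (hF i).isOpen_compl) (by
      intro x _
      obtain ⟨i, hi⟩ := hcon x
      exact mem_iUnion.2 ⟨i, hi⟩)
  obtain ⟨N, hN1, hN2, hN⟩ := (e1'.and ((hlim.eventually (gt_mem_nhds hδ)).and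
    (Filter.eventually_gt_atTop 0))).exists
  have hN' : (0 : ℝ) < N := by exact_mod_cast hN
  have hch : ∀ x, ∃ i, x ∈ F i := by
    intro x
    have : x ∈ ⋃ i, F i := by rw [hcov]; trivial
    exact mem_iUnion.1 this
  choose f hf using hch
  obtain ⟨X, C, hD, him⟩ := scarf (gr n N) (gr_inj n N) (fun a => f (gp n N hN a) + 1)
  have hCne : C.Nonempty := by
    obtain ⟨i, hi, -⟩ := hD (Classical.arbitrary _)
    exact ⟨i, hi⟩
  have hXne : X.Nonempty := by
    rw [← him] at hCne
    exact Finset.image_nonempty.1 hCne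
  obtain ⟨g1, g2⟩ := grid_est n N X C hD hXne
  have hget : ∀ j, j + 1 ∈ C → ∃ a ∈ X, gp n N hN a ∈ F j := by
    intro j hj
    rw [← him, Finset.mem_image] at hj
    obtain ⟨a, ha, he⟩ := hj
    refine ⟨a, ha, ?_⟩
    rw [← add_right_cancel he]
    exact hf _
  have hC : ∀ j, j ∈ C := by
    apply fin_closed n C hCne
    intro j hj
    obtain ⟨a, ha, hFa⟩ := hget j hj
    by_contra hjC
    have h1 := g1 a ha j hjC
    have h2 := hN1 j _ hFa
    have h3 : (n : ℝ) / N < ((a.1 j : ℕ) : ℝ) / N := h2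
    rw [div_lt_div_iff_of_pos_right hN'] at h3
    have : n < (a.1 j : ℕ) := by exact_mod_cast h3
    omega
  obtain ⟨a0, ha0⟩ := hXne
  obtain ⟨i, hi⟩ := hleb (gp n N hN a0) (mem_univ _)
  obtain ⟨a, ha, hFa⟩ := hget i (hC _)
  refine hi ?_ hFa
  rw [Metric.mem_ball, Subtype.dist_eq, dist_pi_lt_iff hδ]
  intro j
  refine lt_of_le_of_lt ?_ hN2
  change dist (((a.1 j : ℕ) : ℝ) / N) (((a0.1 j : ℕ) : ℝ) / N) ≤ _
  rw [Real.dist_eq, ← sub_div, abs_div, abs_of_pos hN', div_le_div_iff_of_pos_right hN', abs_le]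
  have p1 : ((a.1 j : ℕ) : ℝ) ≤ (a0.1 j : ℕ) + n := by exact_mod_cast g2 a ha a0 ha0 j
  have p2 : ((a0.1 j : ℕ) : ℝ) ≤ (a.1 j : ℕ) + n := by exact_mod_cast g2 a0 ha0 a ha j
  constructor <;> linarith

theorem simplex_lower (n m : ℕ) (h : CovDimLE (Simp n) m) : n ≤ m := by
  obtain ⟨V, hVo, hVU, hVc, hVn⟩ := h (Fin (n+1)) (fun i => {x | 0 < x.1 i}) inferInstance
    (fun i => isOpen_lt continuous_const ((continuous_apply i).comp continuous_subtype_val)) (by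
      rw [eq_univ_iff_forall]
      intro x
      rw [mem_iUnion]
      by_contra hcon
      push Not at hcon
      have h1 := x.2.2
      rw [Finset.sum_eq_zero (fun i _ => le_antisymm (not_lt.1 (hcon i)) (x.2.1 i))] at h1
      exact zero_ne_one h1)
  obtain ⟨F, hF1, hF2, hF3⟩ := exists_iUnion_eq_closed_subset hVo
    (fun x => Set.toFinite _) hVc
  obtain ⟨x, hx⟩ := kkm n F hF2 hF1 (fun i x hx => hVU i (hF3 i hx))
  have h1 := hVn x
  have h2 : {i | x ∈ V i} = univ := eq_univ_of_forall (fun i => hF3 i (hx i))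
  rw [h2, Set.ncard_univ, Nat.card_eq_fintype_card, Fintype.card_fin] at h1
  omega

end KKM

section Dim

lemma CovDimLE.of_closedEmbedding {X Z : Type*} [TopologicalSpace X] [TopologicalSpace Z]
    {f : X → Z} (hf : Topology.IsClosedEmbedding f) {n : ℕ} (h : CovDimLE Z n) :
    CovDimLE X n := by
  intro ι U hfin hU hcov
  rcases isEmpty_or_nonempty ι with hι | hι
  · refine ⟨U, hU, fun i => Subset.rfl, hcov, fun x => ?_⟩
    have : {i | x ∈ U i} = ∅ := Subsingleton.elim _ _
    rw [this]; simp
  have : ∀ i, ∃ W : Set Z, IsOpen W ∧ f ⁻¹' W = U i := fun i =>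
    hf.isInducing.isOpen_iff.1 (hU i)
  choose W hW1 hW2 using this
  obtain ⟨V, hV1, hV2, hV3, hV4⟩ := h ι (fun i => W i ∪ (range f)ᶜ) hfin
    (fun i => (hW1 i).union hf.isClosed_range.isOpen_compl) (by
      rw [eq_univ_iff_forall]
      intro z
      rw [mem_iUnion]
      by_cases hz : z ∈ range f
      · obtain ⟨x, rfl⟩ := hz
        have : x ∈ ⋃ i, U i := by rw [hcov]; trivial
        obtain ⟨i, hi⟩ := mem_iUnion.1 this
        rw [← hW2] at hi
        exact ⟨i, Or.inl hi⟩
      · exact ⟨Classical.arbitrary ι, Or.inr hz⟩)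
  refine ⟨fun i => f ⁻¹' (V i), fun i => (hV1 i).preimage hf.continuous, ?_, ?_, ?_⟩
  · intro i x hx
    rw [← hW2]
    rcases hV2 i hx with h | h
    · exact h
    · exact absurd (mem_range_self x) h
  · rw [← preimage_iUnion, hV3, preimage_univ]
  · intro x
    exact hV4 (f x)

lemma finDim_of_injective {X ι : Type} [TopologicalSpace X] [CompactSpace X] [Fintype ι]
    (f : X → ι → ℝ) (hf : Continuous f) (hinj : Injective f) : FinDimSpace X := by
  classical
  have hemb : Topology.IsClosedEmbedding f := hf.isClosedEmbedding hinj
  refine ⟨2 ^ Fintype.card ι, ?_⟩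
  intro κ U hfin hU hcov
  rcases isEmpty_or_nonempty κ with hκ | hκ
  · refine ⟨U, hU, fun i => Subset.rfl, hcov, fun x => ?_⟩
    have : {i | x ∈ U i} = ∅ := Subsingleton.elim _ _
    rw [this]; simp
  have : ∀ i, ∃ W : Set (ι → ℝ), IsOpen W ∧ f ⁻¹' W = U i := fun i =>
    hemb.isInducing.isOpen_iff.1 (hU i)
  choose W hW1 hW2 using this
  obtain ⟨δ, hδ, hleb⟩ := lebesgue_number_lemma_of_metric (isCompact_range hf) hW1 (by
    rintro _ ⟨x, rfl⟩
    have : x ∈ ⋃ i, U i := by rw [hcov]; trivial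
    obtain ⟨i, hi⟩ := mem_iUnion.1 this
    rw [← hW2] at hi
    exact mem_iUnion.2 ⟨i, hi⟩)
  set ε := δ / 2 with hε
  have hε0 : 0 < ε := by positivity
  let B : (ι → ℤ) → Set X := fun k => {x | ∀ j, |f x j / ε - k j| < 1}
  have hBo : ∀ k, IsOpen (B k) := by
    intro k
    have : B k = ⋂ j, {x | |f x j / ε - k j| < 1} := by ext x; simp [B]
    rw [this]
    refine isOpen_iInter_of_finite fun j => isOpen_lt ?_ continuous_const
    have : Continuous fun x => f x j := (continuous_apply j).comp hf
    fun_prop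
  have hBU : ∀ k, (B k).Nonempty → ∃ i, B k ⊆ U i := by
    rintro k ⟨x, hx⟩
    obtain ⟨i, hi⟩ := hleb (f x) (mem_range_self x)
    refine ⟨i, fun y hy => ?_⟩
    rw [← hW2]
    apply hi
    rw [Metric.mem_ball, dist_pi_lt_iff hδ]
    intro j
    have h1 := abs_lt.1 (hx j)
    have h2 := abs_lt.1 (hy j)
    have h3 : |f y j / ε - f x j / ε| < 2 := by
      rw [abs_lt]; constructor <;> linarith [h1.1, h1.2, h2.1, h2.2]
    rw [← sub_div, abs_div, abs_of_pos hε0, div_lt_iff₀ hε0] at h3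
    rw [Real.dist_eq]
    linarith
  have hBcov : ∀ x, x ∈ B (fun j => ⌊f x j / ε⌋) := by
    intro x j
    have h1 := Int.floor_le (f x j / ε)
    have h2 := Int.lt_floor_add_one (f x j / ε)
    rw [abs_lt]; constructor <;> linarith
  have hBmem : ∀ x k, x ∈ B k → ∀ j, k j = ⌊f x j / ε⌋ ∨ k j = ⌊f x j / ε⌋ + 1 := by
    intro x k hx j
    have h := abs_lt.1 (hx j)
    have h1 := Int.floor_le (f x j / ε)
    have h2 := Int.lt_floor_add_one (f x j / ε)
    have h3 : (k j : ℝ) < ⌊f x j / ε⌋ + 2 := by linarith [h.1]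
    have h4 : (⌊f x j / ε⌋ : ℝ) < k j + 1 := by linarith [h.2]
    have h3' : k j < ⌊f x j / ε⌋ + 2 := by exact_mod_cast h3
    have h4' : ⌊f x j / ε⌋ < k j + 1 := by exact_mod_cast h4
    omega
  choose! g hg using hBU
  refine ⟨fun i => ⋃ k, ⋃ (_ : (B k).Nonempty ∧ g k = i), B k, ?_, ?_, ?_, ?_⟩
  · intro i
    exact isOpen_iUnion fun k => isOpen_iUnion fun _ => hBo k
  · intro i
    refine iUnion_subset fun k => iUnion_subset fun h => ?_
    rw [← h.2]
    exact hg k h.1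
  · rw [eq_univ_iff_forall]
    intro x
    simp only [mem_iUnion]
    exact ⟨_, _, ⟨⟨x, hBcov x⟩, rfl⟩, hBcov x⟩
  · intro x
    let Q : Finset (ι → ℤ) := Fintype.piFinset
      (fun j => ({⌊f x j / ε⌋, ⌊f x j / ε⌋ + 1} : Finset ℤ))
    have hQ : Q.card ≤ 2 ^ Fintype.card ι := by
      rw [Fintype.card_piFinset]
      refine (Finset.prod_le_pow_card _ _ 2 fun j _ => Finset.card_le_two).trans ?_
      simp
    have hsub : {i | x ∈ ⋃ k, ⋃ (_ : (B k).Nonempty ∧ g k = i), B k} ⊆ (Q.image g : Finset κ) := by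
      intro i hi
      simp only [mem_ofPred_eq, mem_iUnion] at hi
      obtain ⟨k, ⟨-, hk⟩, hx⟩ := hi
      rw [Finset.mem_coe, Finset.mem_image]
      refine ⟨k, ?_, hk⟩
      rw [Fintype.mem_piFinset]
      intro j
      rcases hBmem x k hx j with h | h <;> simp [h]
    have h1 := Set.ncard_le_ncard hsub (Finset.finite_toSet _)
    rw [Set.ncard_coe_finset] at h1
    have h2 := Finset.card_image_le (s := Q) (f := g)
    exact (h1.trans (h2.trans hQ)).trans (Nat.le_succ _)

end Dim

section Space

lemma isClosed_or {X : Type} [TopologicalSpace X] {p q : X → Prop}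
    (h : IsClosed {x | p x}) (h' : IsClosed {x | q x}) : IsClosed {x | p x ∨ q x} :=
  h.union h'

lemma isClosed_forall {X ι : Type} [TopologicalSpace X] {p : ι → X → Prop}
    (h : ∀ i, IsClosed {x | p i x}) : IsClosed {x | ∀ i, p i x} := by
  rw [ofPred_forall]
  exact isClosed_iInter h

def YS : Set (ℕ → ℝ) := {x | (∀ i, 0 ≤ x i ∧ x i ≤ x 0) ∧ x 0 ≤ 1 ∧
  ∀ n : ℕ, (x 0 ≤ 1 / ((n : ℝ) + 2) ∨ 1 / ((n : ℝ) + 1) ≤ x 0) ∧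
    (x (n + 1) = 0 ∨ x 0 ≤ 1 / ((n : ℝ) + 1))}

lemma YS_compact : IsCompact YS := by
  have hbox : IsCompact (Set.pi univ (fun _ : ℕ => Icc (0 : ℝ) 1)) :=
    isCompact_univ_pi fun _ => isCompact_Icc
  refine hbox.of_isClosed_subset ?_ ?_
  · have c : ∀ i, Continuous fun x : ℕ → ℝ => x i := fun i => continuous_apply i
    refine IsClosed.and ?_ (IsClosed.and ?_ ?_)
    · exact isClosed_forall fun i =>
        (isClosed_le continuous_const (c i)).and (isClosed_le (c i) (c 0))
    · exact isClosed_le (c 0) continuous_const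
    · exact isClosed_forall fun n =>
        (isClosed_or (isClosed_le (c 0) continuous_const) (isClosed_le continuous_const (c 0))).and
        (isClosed_or (isClosed_eq (c _) continuous_const) (isClosed_le (c 0) continuous_const))
  · intro x hx i _
    exact ⟨(hx.1 i).1, (hx.1 i).2.trans hx.2.1⟩

abbrev Y := ↥YS

instance : CompactSpace Y := isCompact_iff_compactSpace.1 YS_compact

def y0 : Y := ⟨fun _ => 0, by
  refine ⟨by simp, by simp, fun n => ⟨Or.inl (by positivity), Or.inl rfl⟩⟩⟩

lemma eq_y0 (y : Y) (h : y.1 0 ≤ 0) : y = y0 := by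
  apply Subtype.ext
  funext i
  exact le_antisymm ((y.2.1 i).2.trans h) (y.2.1 i).1

def em (p : ℕ) (z : Simp p) : Y :=
  ⟨fun i => if i = 0 then 1 / ((p : ℝ) + 1) else
    if h : i - 1 < p + 1 then z.1 ⟨i - 1, h⟩ * (1 / ((p : ℝ) + 1)) else 0, by
    have hp : (0 : ℝ) < 1 / ((p : ℝ) + 1) := by positivity
    refine ⟨?_, ?_, ?_⟩
    · intro i
      simp only [if_true]
      split_ifs with h1 h2
      · exact ⟨hp.le, le_rfl⟩
      · have a := z.2.1 ⟨i - 1, h2⟩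
        have b : z.1 ⟨i - 1, h2⟩ ≤ 1 := by
          rw [← z.2.2]
          exact Finset.single_le_sum (f := z.1) (fun i _ => z.2.1 i) (Finset.mem_univ _)
        exact ⟨mul_nonneg a hp.le, mul_le_of_le_one_left hp.le b⟩
      · exact ⟨le_rfl, hp.le⟩
    · simp only [if_true]
      rw [div_le_one (by positivity)]
      have : (0 : ℝ) ≤ p := Nat.cast_nonneg p
      linarith
    · intro n
      simp only [if_true]
      constructor
      · rcases Nat.lt_or_ge n p with h | h
        · left
          have : (n : ℝ) + 1 ≤ p := by exact_mod_cast h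
          apply one_div_le_one_div_of_le
          · positivity
          · linarith
        · right
          have : (p : ℝ) ≤ n := by exact_mod_cast h
          apply one_div_le_one_div_of_le
          · positivity
          · linarith
      · rcases Nat.lt_or_ge n (p + 1) with h | h
        · right
          have : (n : ℝ) ≤ p := by exact_mod_cast Nat.lt_succ_iff.1 h
          apply one_div_le_one_div_of_le
          · positivity
          · linarith
        · left
          simp [Nat.not_lt.2 h]⟩

lemma em_zero (p : ℕ) (z : Simp p) : (em p z).1 0 = 1 / ((p : ℝ) + 1) := by
  simp [em]

lemma em_succ (p : ℕ) (z : Simp p) (i : Fin (p+1)) :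
    (em p z).1 (i + 1) = z.1 i * (1 / ((p : ℝ) + 1)) := by
  have : (i : ℕ) + 1 - 1 < p + 1 := by omega
  simp only [em, Nat.succ_ne_zero, if_false, dif_pos this]
  rfl

lemma em_cont (p : ℕ) : Continuous (em p) := by
  refine Continuous.subtype_mk (continuous_pi fun i => ?_) _
  split_ifs with h1 h2
  · exact continuous_const
  · exact ((continuous_apply _).comp continuous_subtype_val).mul continuous_const
  · exact continuous_const

lemma em_inj (p : ℕ) : Injective (em p) := by
  intro z w h
  apply Subtype.ext
  funext i
  have hp : (0 : ℝ) < 1 / ((p : ℝ) + 1) := by positivity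
  have := em_succ p z i
  rw [h, em_succ] at this
  exact (mul_right_cancel₀ hp.ne' this).symm

lemma em_nhds (V : Set Y) (hV : IsOpen V) (h0 : y0 ∈ V) :
    ∃ P : ℕ, ∀ p ≥ P, ∀ z, em p z ∈ V := by
  by_contra hcon
  push Not at hcon
  choose p hp z hz using hcon
  have : Filter.Tendsto (fun P => em (p P) (z P)) Filter.atTop (nhds y0) := by
    rw [tendsto_subtype_rng, tendsto_pi_nhds]
    intro i
    refine squeeze_zero (fun P => ((em (p P) (z P)).2.1 i).1) (fun P => ?_)
      tendsto_one_div_add_atTop_nhds_zero_nat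
    refine ((em (p P) (z P)).2.1 i).2.trans ?_
    rw [em_zero]
    have : (P : ℝ) ≤ p P := by exact_mod_cast hp P
    apply one_div_le_one_div_of_le
    · positivity
    · linarith
  obtain ⟨P, hP⟩ := (this.eventually (hV.mem_nhds h0)).exists
  exact hz P hP

open Classical in
def zs {m : ℕ} (x : Fin m → Y) : Finset (Fin m) := Finset.univ.filter (fun i => x i = y0)

def SS (m j : ℕ) : Set (Fin m → Y) := {x | j ≤ (zs x).card}

lemma mem_zs {m : ℕ} (x : Fin m → Y) (i : Fin m) : i ∈ zs x ↔ x i = y0 := by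
  simp [zs]

lemma exists_small {m : ℕ} (x : Fin m → Y) :
    ∃ n : ℕ, ∀ i, x i ≠ y0 → 1 / ((n : ℝ) + 2) < (x i).1 0 := by
  have : ∀ i, ∀ᶠ n : ℕ in Filter.atTop, x i ≠ y0 → 1 / ((n : ℝ) + 1) < (x i).1 0 := by
    intro i
    by_cases h : x i = y0
    · simp [h]
    · have hpos : 0 < (x i).1 0 := by
        by_contra hle
        exact h (eq_y0 _ (not_lt.1 hle))
      filter_upwards [tendsto_one_div_add_atTop_nhds_zero_nat.eventually
        (gt_mem_nhds hpos)] with n hn _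
      exact hn
  obtain ⟨n, hn⟩ := (Filter.eventually_all.2 this).exists
  refine ⟨n, fun i hi => lt_of_le_of_lt ?_ (hn i hi)⟩
  apply one_div_le_one_div_of_le
  · positivity
  · linarith

lemma step_pos (m j : ℕ) (x : Fin m → Y) (hx : (zs x).card = j) :
    x ∈ fdI (Fin m → Y) (SS m j) := by
  refine ⟨hx.ge, ?_⟩
  obtain ⟨n, hn⟩ := exists_small x
  have hc : ∀ (i : Fin m) (t : ℕ), Continuous fun y : Fin m → Y => (y i).1 t := fun i t =>
    (continuous_apply t).comp (continuous_subtype_val.comp (continuous_apply i))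
  set U : Set (Fin m → Y) := {y | ∀ i, x i ≠ y0 → 1 / ((n : ℝ) + 2) < (y i).1 0} with hU
  have hpos2 : (0 : ℝ) < 1 / ((n : ℝ) + 2) := by positivity
  have hpos1 : (0 : ℝ) < 1 / ((n : ℝ) + 1) := by positivity
  have hlt : 1 / ((n : ℝ) + 2) < 1 / ((n : ℝ) + 1) := by
    apply one_div_lt_one_div_of_lt
    · positivity
    · linarith
  have hUeq : U ∩ SS m j = {y | ∀ i, (x i ≠ y0 ∧ 1 / ((n : ℝ) + 1) ≤ (y i).1 0) ∨
      (x i = y0 ∧ y i = y0)} := by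
    ext y
    constructor
    · rintro ⟨h1, h2⟩ i
      have hsub : zs y ⊆ zs x := by
        intro i hi
        rw [mem_zs] at hi ⊢
        by_contra hne
        have := h1 i hne
        rw [hi] at this
        exact absurd this (not_lt.2 hpos2.le)
      have heq : zs y = zs x := Finset.eq_of_subset_of_card_le hsub (hx.le.trans h2)
      by_cases hi : x i = y0
      · right
        refine ⟨hi, ?_⟩
        rw [← mem_zs, heq, mem_zs]
        exact hi
      · left
        refine ⟨hi, ?_⟩
        rcases ((y i).2.2.2 n).1 with h | h
        · exact absurd (h1 i hi) (not_lt.2 h)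
        · exact h
    · intro h
      constructor
      · intro i hi
        rcases h i with h | h
        · exact hlt.trans_le h.2
        · exact absurd h.1 hi
      · have : zs x ⊆ zs y := by
          intro i hi
          rw [mem_zs] at hi ⊢
          rcases h i with h | h
          · exact absurd hi h.1
          · exact h.2
        exact hx.ge.trans (Finset.card_le_card this)
  refine ⟨U, ?_, hn, ?_⟩
  · have : U = ⋂ i, {y | x i ≠ y0 → 1 / ((n : ℝ) + 2) < (y i).1 0} := by
      ext y; simp [hU]
    rw [this]
    refine isOpen_iInter_of_finite fun i => ?_
    by_cases hi : x i = y0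
    · simp [hi]
    · simp only [ne_eq, hi, not_false_eq_true, true_imp_iff]
      exact isOpen_lt continuous_const (hc i 0)
  · rw [hUeq]
    set K : Set (Fin m → Y) := {y | ∀ i, (x i ≠ y0 ∧ 1 / ((n : ℝ) + 1) ≤ (y i).1 0) ∨
      (x i = y0 ∧ y i = y0)} with hK
    have hKc : IsClosed K := by
      refine isClosed_forall fun i => ?_
      refine isClosed_or (isClosed_const.and ?_) (isClosed_const.and ?_)
      · exact isClosed_le continuous_const (hc i 0)
      · exact isClosed_eq (continuous_apply i) continuous_const
    have : CompactSpace K := isCompact_iff_compactSpace.1 hKc.isCompact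
    refine finDim_of_injective (ι := Fin m × Fin (n+2))
      (fun y q => (y.1 q.1).1 q.2) ?_ ?_
    · exact continuous_pi fun q => (hc q.1 q.2).comp continuous_subtype_val
    · intro y w h
      apply Subtype.ext
      funext i
      rcases y.2 i with hy | hy
      · rcases w.2 i with hw | hw
        · apply Subtype.ext
          funext t
          by_cases ht : t < n + 2
          · exact congrFun h (i, ⟨t, ht⟩)
          · have key : ∀ v : Y, 1 / ((n : ℝ) + 1) ≤ v.1 0 → v.1 t = 0 := by
              intro v hv
              obtain ⟨s, rfl⟩ : ∃ s, t = s + 1 := ⟨t - 1, by omega⟩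
              rcases (v.2.2.2 s).2 with h | h
              · exact h
              · exfalso
                have h1 := hv.trans h
                have h2 : 1 / ((s : ℝ) + 1) < 1 / ((n : ℝ) + 1) := by
                  apply one_div_lt_one_div_of_lt
                  · positivity
                  · have : n < s := by omega
                    have : (n : ℝ) < s := by exact_mod_cast this
                    linarith
                linarith
            rw [key _ hy.2, key _ hw.2]
        · exact absurd hw.1 hy.1
      · rcases w.2 i with hw | hw
        · exact absurd hy.1 hw.1
        · rw [hy.2, hw.2]

lemma step_neg (m j : ℕ) (x : Fin m → Y) (hx : j < (zs x).card) :
    x ∉ fdI (Fin m → Y) (SS m j) := by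
  rintro ⟨-, U, hU, hxU, n, hn⟩
  obtain ⟨i0, hi0⟩ : (zs x).Nonempty := Finset.card_pos.1 (by omega)
  have hup : Continuous fun y : Y => update x i0 y := continuous_const.update i0 continuous_id
  obtain ⟨P, hP⟩ := em_nhds _ (hU.preimage hup) (by
    rw [mem_zs] at hi0
    rw [mem_preimage, ← hi0, update_eq_self]
    exact hxU)
  set p := max P (n + 1) with hp
  have hS : ∀ y, update x i0 y ∈ SS m j := by
    intro y
    have : (zs x).erase i0 ⊆ zs (update x i0 y) := by
      intro i hi
      rw [Finset.mem_erase, mem_zs] at hi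
      rw [mem_zs, update_of_ne hi.1]
      exact hi.2
    have h2 := Finset.card_le_card this
    rw [Finset.card_erase_of_mem hi0] at h2
    change j ≤ _
    omega
  let g : Simp p → ↥(U ∩ SS m j) := fun z => ⟨update x i0 (em p z), hP p (le_max_left _ _) z, hS _⟩
  have hg : Continuous g := Continuous.subtype_mk (hup.comp (em_cont p)) _
  have hgi : Injective g := by
    intro z w h
    have := congrFun (congrArg Subtype.val h) i0
    simp only [g, update_self] at this
    exact em_inj p this
  have := simplex_lower p n (CovDimLE.of_closedEmbedding (hg.isClosedEmbedding hgi) hn)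
  have : n + 1 ≤ p := le_max_right _ _
  omega

lemma fdDerived_eq (m j : ℕ) : fdDerived (Fin m → Y) (j : Ordinal) = SS m j := by
  induction j with
  | zero =>
    rw [Nat.cast_zero, fdDerived, Ordinal.limitRecOn_zero]
    ext x; simp [SS]
  | succ j ih =>
    have : fdDerived (Fin m → Y) ((j : Ordinal) + 1) =
        fdDerived (Fin m → Y) (j : Ordinal) \ fdI (Fin m → Y) (fdDerived (Fin m → Y) (j : Ordinal)) := by
      simp only [fdDerived]
      rw [Ordinal.limitRecOn_add_one]
    rw [Nat.cast_succ, this, ih]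
    ext x
    constructor
    · rintro ⟨h1, h2⟩
      have h1 : j ≤ (zs x).card := h1
      change j + 1 ≤ (zs x).card
      by_contra hlt
      exact h2 (step_pos m j x (by omega))
    · intro h
      have h : j + 1 ≤ (zs x).card := h
      exact ⟨show j ≤ (zs x).card by omega, step_neg m j x h⟩

end Space

end FdH

/-- for every positive integer `k` there is a compact metrizable space
of fd-height exactly `k`. -/
theorem exists_compact_metrizable_fdHeight_eq (k : ℕ) (hk : 0 < k) :
    ∃ (K : Type) (t : TopologicalSpace K),
      @CompactSpace K t ∧ @TopologicalSpace.MetrizableSpace K t ∧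
      @fdDerived K t (k : Ordinal) = ∅ ∧
      ∀ β : Ordinal, β < (k : Ordinal) → @fdDerived K t β ≠ ∅ := by
  obtain ⟨m, rfl⟩ : ∃ m, k = m + 1 := ⟨k - 1, by omega⟩
  refine ⟨Fin m → FdH.Y, inferInstance, inferInstance, inferInstance, ?_, ?_⟩
  · rw [FdH.fdDerived_eq, eq_empty_iff_forall_notMem]
    intro x hx
    have h1 : m + 1 ≤ (FdH.zs x).card := hx
    have h2 := Finset.card_le_univ (FdH.zs x)
    rw [Fintype.card_fin] at h2
    omega
  · intro β hβ
    obtain ⟨j, rfl⟩ := Ordinal.lt_omega0.1 (hβ.trans (Ordinal.natCast_lt_omega0 _))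
    have hj : j < m + 1 := by exact_mod_cast hβ
    rw [FdH.fdDerived_eq, ← nonempty_iff_ne_empty]
    refine ⟨fun _ => FdH.y0, ?_⟩
    change j ≤ (FdH.zs _).card
    have : FdH.zs (fun _ : Fin m => FdH.y0) = Finset.univ := by
      ext i; simp [FdH.mem_zs]
    rw [this, Finset.card_univ, Fintype.card_fin]
    omega
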